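/- Let 0 < p ≤ 1 and λ ∈ [0,1]. The map A ↦ (λA^p + (1-λ)I)^{1/p} is concave on n×n positive definite complex matrices: for positive definite A₁, A₂ and α ∈ [0,1], (λ(αA₁+(1-α)A₂)^p + (1-λ)I)^{1/p} ≥ α(λA₁^p + (1-λ)I)^{1/p} + (1-α)(λA₂^p + (1-λ)I)^{1/p} in the Loewner order. -/

import Mathlib

open Matrix
open scoped ComplexOrder

/-- Matrix power by a real exponent via the functional calculus
(unitary diagonalization for Hermitian matrices; junk value otherwise). -/
noncomputable def mpow {n : ℕ} (A : Matrix (Fin n) (Fin n) ℂ) (q : ℝ) :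
    Matrix (Fin n) (Fin n) ℂ :=
  if hA : A.IsHermitian then
    (hA.eigenvectorUnitary : Matrix (Fin n) (Fin n) ℂ) *
      Matrix.diagonal (fun i => ((hA.eigenvalues i ^ q : ℝ) : ℂ)) *
      (star (hA.eigenvectorUnitary : Matrix (Fin n) (Fin n) ℂ))
  else 0

/-!
Put `f = (l a ^ p + m) ^ (1 / p)`. Since all elements involved commute, `f` is the fixed point of
`f ↦ l (f #ₚ a) + m (f #ₚ 1)`, where `#ₚ` is the weighted geometric mean, and iterating this map
from `f = 1` produces `(l a ^ p + m) ^ s` with `s = ∑ i < k, (1 - p) ^ i`, which increases to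
`1 / p`. The geometric mean is jointly concave and monotone, being an integral of parallel sums, so
every iterate is a concave function of `a`, and so is the limit.
-/

section ParallelSum

open scoped Ring

variable {A : Type*} [Ring A] [StarRing A]

/-- The parallel sum `(x⁻¹ + k⁻¹)⁻¹` of two positive elements, written as `x - x (x + k)⁻¹ x` so
that only `x + k` has to be invertible. -/
noncomputable def parallelSum (x k : A) : A := x - x * (x + k)⁻¹ʳ * x

lemma conj_add_conj_sub_parallelSum {x k : A} (hx : IsSelfAdjoint x) (hk : IsSelfAdjoint k)
    (hxk : IsUnit (x + k)) (c : A) :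
    star (1 - c) * x * (1 - c) + star c * k * c - parallelSum x k =
      star (c - (x + k)⁻¹ʳ * x) * (x + k) * (c - (x + k)⁻¹ʳ * x) := by
  set u := (x + k)⁻¹ʳ
  have hu : star u = u := (hx.add hk).ringInverse.star_eq
  have hleft : star (c - u * x) * (x + k) = star c * (x + k) - x := by
    rw [star_sub, star_mul, hu, hx.star_eq, sub_mul, mul_assoc, Ring.inverse_mul_cancel _ hxk,
      mul_one]
  have hcross : star c * (x + k) * (u * x) = star c * x := by
    rw [mul_assoc, Ring.mul_inverse_cancel_left _ _ hxk]
  rw [hleft, mul_sub (star c * (x + k) - x), sub_mul _ x (u * x), hcross, parallelSum, star_sub,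
    star_one]
  noncomm_ring

lemma parallelSum_eq_conj_add_conj {x k : A} (hx : IsSelfAdjoint x) (hk : IsSelfAdjoint k)
    (hxk : IsUnit (x + k)) :
    parallelSum x k = star (1 - (x + k)⁻¹ʳ * x) * x * (1 - (x + k)⁻¹ʳ * x) +
      star ((x + k)⁻¹ʳ * x) * k * ((x + k)⁻¹ʳ * x) := by
  have hsub := conj_add_conj_sub_parallelSum hx hk hxk ((x + k)⁻¹ʳ * x)
  rw [sub_self, mul_zero, sub_eq_zero] at hsub
  exact hsub.symm

lemma star_mul_parallelSum_mul {u : A} (hu : IsUnit u) (x k : A) :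
    star u * parallelSum x k * u = parallelSum (star u * x * u) (star u * k * u) := by
  have hinv : (star u * x * u + star u * k * u)⁻¹ʳ = u⁻¹ʳ * (x + k)⁻¹ʳ * (star u)⁻¹ʳ := by
    rw [← add_mul, ← mul_add, Ring.inverse_mul (.inr hu), Ring.inverse_mul (.inl hu.star),
      mul_assoc]
  have hmid : star u * x * u * (u⁻¹ʳ * (x + k)⁻¹ʳ * (star u)⁻¹ʳ) * (star u * x * u) =
      star u * (x * (x + k)⁻¹ʳ * x) * u := by
    simp only [mul_assoc, Ring.mul_inverse_cancel_left _ _ hu,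
      Ring.inverse_mul_cancel_left _ _ hu.star]
  rw [parallelSum, parallelSum, hinv, hmid, mul_sub, sub_mul]

variable [PartialOrder A] [StarOrderedRing A]

lemma parallelSum_le_conj_add_conj {x k : A} (hx : 0 ≤ x) (hk : 0 ≤ k) (hxk : IsUnit (x + k))
    (c : A) :
    parallelSum x k ≤ star (1 - c) * x * (1 - c) + star c * k * c := by
  rw [← sub_nonneg, conj_add_conj_sub_parallelSum (.of_nonneg hx) (.of_nonneg hk) hxk]
  exact star_left_conjugate_nonneg (add_nonneg hx hk) _

-- A parallel sum is the minimum over `c` of expressions linear in `(x, k)`.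
lemma concaveOn_parallelSum [Algebra ℝ A] [PosSMulMono ℝ A] {E : Type*} [AddCommMonoid E]
    [Module ℝ E] {S : Set E} {F G : E → A} (hF : ConcaveOn ℝ S F) (hG : ConcaveOn ℝ S G)
    (hF0 : ∀ z ∈ S, 0 ≤ F z) (hG0 : ∀ z ∈ S, 0 ≤ G z) (hFG : ∀ z ∈ S, IsUnit (F z + G z)) :
    ConcaveOn ℝ S fun z => parallelSum (F z) (G z) := by
  refine ⟨hF.1, fun a ha b hb α β hα hβ hαβ => ?_⟩
  set z := α • a + β • b
  have hz : z ∈ S := hF.1 ha hb hα hβ hαβ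
  set c := (F z + G z)⁻¹ʳ * F z
  calc α • parallelSum (F a) (G a) + β • parallelSum (F b) (G b)
      ≤ α • (star (1 - c) * F a * (1 - c) + star c * G a * c) +
          β • (star (1 - c) * F b * (1 - c) + star c * G b * c) := by
        gcongr
        · exact parallelSum_le_conj_add_conj (hF0 a ha) (hG0 a ha) (hFG a ha) c
        · exact parallelSum_le_conj_add_conj (hF0 b hb) (hG0 b hb) (hFG b hb) c
    _ = star (1 - c) * (α • F a + β • F b) * (1 - c) + star c * (α • G a + β • G b) * c := by
        simp only [smul_add, mul_add, add_mul, mul_smul_comm, smul_mul_assoc]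
        abel
    _ ≤ star (1 - c) * F z * (1 - c) + star c * G z * c :=
        add_le_add (star_left_conjugate_le_conjugate (hF.2 ha hb hα hβ hαβ) _)
          (star_left_conjugate_le_conjugate (hG.2 ha hb hα hβ hαβ) _)
    _ = parallelSum (F z) (G z) :=
        (parallelSum_eq_conj_add_conj (.of_nonneg (hF0 z hz)) (.of_nonneg (hG0 z hz))
          (hFG z hz)).symm

end ParallelSum

section GeomMean

open CFC MeasureTheory Real Set
open scoped Ring NNReal

variable {A : Type*} [CStarAlgebra A] [PartialOrder A] [StarOrderedRing A]

lemma conjSqrt_nonneg (c : A) {a : A} (ha : 0 ≤ a) : 0 ≤ conjSqrt c a := by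
  simpa only [map_zero] using conjSqrt_le_conjSqrt (c := c) ha

lemma conjSqrt_parallelSum {c : A} (hc : IsStrictlyPositive c) (x k : A) :
    conjSqrt c (parallelSum x k) = parallelSum (conjSqrt c x) (conjSqrt c k) := by
  have hu := star_mul_parallelSum_mul hc.isUnit_cfcSqrt x k
  rwa [IsSelfAdjoint.star_eq (by cfc_tac)] at hu

lemma cfcₙ_rpowIntegrand₀₁_eq_smul_parallelSum {p t : ℝ} (hp : p ∈ Ioo (0 : ℝ) 1) (ht : 0 < t)
    {a : A} (ha : 0 ≤ a) :
    cfcₙ (rpowIntegrand₀₁ p t) a = t ^ (p - 2) • parallelSum (algebraMap ℝ A t) a := by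
  have hne : ∀ r ∈ spectrum ℝ a, t + r ≠ 0 := fun r hr =>
    (add_pos_of_pos_of_nonneg ht (spectrum_nonneg_of_nonneg ha hr)).ne'
  have hfun : rpowIntegrand₀₁ p t = fun r => t ^ (p - 2) * (t - t ^ 2 * (t + r)⁻¹) := by
    ext r
    rw [rpowIntegrand₀₁, rpow_sub ht, rpow_two]
    field_simp
  have hcont : ContinuousOn (fun r : ℝ => (t + r)⁻¹) (spectrum ℝ a) := by
    fun_prop (disch := assumption)
  have hquasi : ContinuousOn (rpowIntegrand₀₁ p t) (quasispectrum ℝ a) :=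
    (continuousOn_rpowIntegrand₀₁_Ici hp ht).mono fun r hr =>
      quasispectrum_nonneg_of_nonneg a ha r hr
  rw [cfcₙ_eq_cfc hquasi rpowIntegrand₀₁_zero_right, hfun,
    cfc_const_mul _ _ _ (by fun_prop (disch := assumption)),
    cfc_sub _ _ _ continuousOn_const (by fun_prop (disch := assumption)), cfc_const t a,
    cfc_const_mul _ _ _ hcont, cfc_inv _ _ hne, cfc_const_add t _ a, cfc_id' ℝ a,
    parallelSum, ← Algebra.commutes, ← mul_assoc, ← map_mul, ← Algebra.smul_def, sq]

lemma conjSqrt_cfcₙ_rpowIntegrand₀₁ {p t : ℝ} (hp : p ∈ Ioo (0 : ℝ) 1) (ht : 0 < t) {x k : A}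
    (hx : IsStrictlyPositive x) (hk : 0 ≤ k) :
    conjSqrt x (cfcₙ (rpowIntegrand₀₁ p t) (conjSqrt x⁻¹ʳ k)) =
      t ^ (p - 2) • parallelSum (t • x) k := by
  rw [cfcₙ_rpowIntegrand₀₁_eq_smul_parallelSum hp ht (conjSqrt_nonneg _ hk), map_smul,
    conjSqrt_parallelSum hx, Algebra.algebraMap_eq_smul_one, map_smul, conjSqrt_one x,
    conjSqrt_conjSqrt_ringInverse x]

/-- The weighted (Kubo–Ando) geometric mean `x #ₚ k = x^½ (x^(-½) k x^(-½))^p x^½` of a strictly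
positive `x` and a nonnegative `k`; the weight `p` is that of `k`. -/
noncomputable def geomMean (p : ℝ) (x k : A) : A := conjSqrt x (conjSqrt x⁻¹ʳ k ^ p)

section Concave

variable {E : Type*} [AddCommMonoid E] [Module ℝ E] {S : Set E} {F G : E → A} {p : ℝ}

lemma concaveOn_geomMean_of_mem_Ioo (hp : p ∈ Ioo (0 : ℝ) 1) (hF : ConcaveOn ℝ S F)
    (hG : ConcaveOn ℝ S G) (hF0 : ∀ z ∈ S, IsStrictlyPositive (F z)) (hG0 : ∀ z ∈ S, 0 ≤ G z) :
    ConcaveOn ℝ S fun z => geomMean p (F z) (G z) := by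
  lift p to ℝ≥0 using hp.1.le
  obtain ⟨μ, hμ⟩ := exists_measure_nnrpow_eq_integral_cfcₙ_rpowIntegrand₀₁ A (p := p)
    (by exact_mod_cast hp)
  have hint (z) (hz : z ∈ S) := hμ (conjSqrt (F z)⁻¹ʳ (G z)) (conjSqrt_nonneg _ (hG0 z hz))
  have hrep : S.EqOn (fun z => ∫ t in Ioi 0, conjSqrt (F z)
      (cfcₙ (rpowIntegrand₀₁ p t) (conjSqrt (F z)⁻¹ʳ (G z))) ∂μ)
      fun z => geomMean p (F z) (G z) := fun z hz => by
    dsimp only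
    rw [ContinuousLinearMap.integral_comp_comm _ (hint z hz).1, ← (hint z hz).2,
      nnrpow_eq_rpow (by exact_mod_cast hp.1), geomMean]
  refine .congr (integral_concaveOn_of_integrand_ae hF.1 ?_ fun z hz =>
    (conjSqrt (F z)).integrable_comp (hint z hz).1) hrep
  filter_upwards [ae_restrict_mem measurableSet_Ioi] with t (ht : 0 < t)
  have htF (z) (hz : z ∈ S) : IsStrictlyPositive (t • F z) := (hF0 z hz).smul ht
  have hconc := concaveOn_parallelSum (hF.smul ht.le) hG (fun z hz => (htF z hz).nonneg) hG0
    fun z hz => ((htF z hz).add_nonneg (hG0 z hz)).isUnit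
  exact (hconc.smul (by positivity)).congr fun z hz =>
    (conjSqrt_cfcₙ_rpowIntegrand₀₁ hp ht (hF0 z hz) (hG0 z hz)).symm

lemma concaveOn_geomMean (hp : p ∈ Icc (0 : ℝ) 1) (hF : ConcaveOn ℝ S F) (hG : ConcaveOn ℝ S G)
    (hF0 : ∀ z ∈ S, IsStrictlyPositive (F z)) (hG0 : ∀ z ∈ S, 0 ≤ G z) :
    ConcaveOn ℝ S fun z => geomMean p (F z) (G z) := by
  obtain rfl | h0 := hp.1.eq_or_lt
  · refine hF.congr fun z hz => ?_
    rw [geomMean, CFC.rpow_zero _ (conjSqrt_nonneg _ (hG0 z hz)),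
      conjSqrt_one _ (hF0 z hz).nonneg]
  obtain rfl | h1 := hp.2.eq_or_lt
  · refine hG.congr fun z hz => ?_
    rw [geomMean, CFC.rpow_one _ (conjSqrt_nonneg _ (hG0 z hz)),
      conjSqrt_conjSqrt_ringInverse _ _ (hF0 z hz)]
  · exact concaveOn_geomMean_of_mem_Ioo ⟨h0, h1⟩ hF hG hF0 hG0

end Concave

section Commuting

variable {a : A} {f g : ℝ → ℝ} {p : ℝ}

lemma cfc_rpow_of_nonneg (ha : IsSelfAdjoint a) (hp : 0 ≤ p)
    (hf : ContinuousOn f (spectrum ℝ a)) (hf0 : ∀ x ∈ spectrum ℝ a, 0 ≤ f x) :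
    cfc f a ^ p = cfc (fun x => f x ^ p) a := by
  rw [rpow_eq_cfc_real (cfc_nonneg hf0),
    ← cfc_comp' (fun r => r ^ p) f a (continuousOn_id.rpow_const fun _ _ => .inr hp) hf ha]

lemma conjSqrt_cfc (hf : ContinuousOn f (spectrum ℝ a)) (hg : ContinuousOn g (spectrum ℝ a))
    (hf0 : ∀ x ∈ spectrum ℝ a, 0 ≤ f x) :
    conjSqrt (cfc f a) (cfc g a) = cfc (fun x => f x * g x) a := by
  have hcomm : Commute (cfc g a) (sqrt (cfc f a)) := by
    rw [CFC.sqrt_eq_cfc]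
    exact ((cfc_commute_cfc f g a).cfc_nnreal _).symm
  rw [conjSqrt_apply, mul_assoc, hcomm.eq, ← mul_assoc, sqrt_mul_sqrt_self _ (cfc_nonneg hf0),
    cfc_mul f g a hf hg]

lemma geomMean_cfc (ha : IsSelfAdjoint a) (hp : 0 ≤ p)
    (hf : ContinuousOn f (spectrum ℝ a)) (hg : ContinuousOn g (spectrum ℝ a))
    (hf0 : ∀ x ∈ spectrum ℝ a, 0 < f x) (hg0 : ∀ x ∈ spectrum ℝ a, 0 ≤ g x) :
    geomMean p (cfc f a) (cfc g a) = cfc (fun x => f x ^ (1 - p) * g x ^ p) a := by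
  have hne : ∀ x ∈ spectrum ℝ a, f x ≠ 0 := fun x hx => (hf0 x hx).ne'
  have hinv : ContinuousOn (fun x => (f x)⁻¹) (spectrum ℝ a) := hf.inv₀ hne
  have hinv0 : ∀ x ∈ spectrum ℝ a, 0 ≤ (f x)⁻¹ := fun x hx => (inv_pos.2 (hf0 x hx)).le
  have hquot : ContinuousOn (fun x => (f x)⁻¹ * g x) (spectrum ℝ a) := hinv.mul hg
  have hquotp : ContinuousOn (fun x => ((f x)⁻¹ * g x) ^ p) (spectrum ℝ a) :=
    hquot.rpow_const fun _ _ => .inr hp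
  rw [geomMean, ← cfc_inv f a hne, conjSqrt_cfc hinv hg hinv0,
    cfc_rpow_of_nonneg ha hp hquot fun x hx => mul_nonneg (hinv0 x hx) (hg0 x hx),
    conjSqrt_cfc hf hquotp fun x hx => (hf0 x hx).le]
  refine cfc_congr fun x hx => ?_
  have hfx := hf0 x hx
  rw [mul_rpow (hinv0 x hx) (hg0 x hx), inv_rpow hfx.le, rpow_sub hfx, Real.rpow_one]
  ring

lemma smul_geomMean_add_smul_geomMean_one {l m : ℝ} (ha : 0 ≤ a) (hp : p ∈ Icc (0 : ℝ) 1)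
    (hf : ContinuousOn f (spectrum ℝ a)) (hf0 : ∀ x ∈ spectrum ℝ a, 0 < f x) :
    l • geomMean p (cfc f a) a + m • geomMean p (cfc f a) 1 =
      cfc (fun x => f x ^ (1 - p) * (l * x ^ p + m)) a := by
  have hfp : ContinuousOn (fun x => f x ^ (1 - p)) (spectrum ℝ a) :=
    hf.rpow_const fun _ _ => .inr (sub_nonneg.2 hp.2)
  have hfpx : ContinuousOn (fun x => f x ^ (1 - p) * x ^ p) (spectrum ℝ a) :=
    hfp.mul (continuousOn_id.rpow_const fun _ _ => .inr hp.1)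
  have hself : geomMean p (cfc f a) a = cfc (fun x => f x ^ (1 - p) * x ^ p) a := by
    have := geomMean_cfc (.of_nonneg ha) hp.1 hf continuousOn_id hf0 fun _ hx =>
      spectrum_nonneg_of_nonneg ha hx
    simpa only [cfc_id ℝ a, id] using this
  have hone : geomMean p (cfc f a) 1 = cfc (fun x => f x ^ (1 - p)) a := by
    have := geomMean_cfc (.of_nonneg ha) hp.1 hf continuousOn_const hf0 fun _ _ => zero_le_one
    simpa only [cfc_const_one ℝ a, Real.one_rpow, mul_one] using this
  rw [hself, hone, ← cfc_const_mul l _ a hfpx, ← cfc_const_mul m _ a hfp,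
    ← cfc_add _ _ _ (hfpx.const_mul l) (hfp.const_mul m)]
  exact cfc_congr fun x _ => by ring

end Commuting

end GeomMean

section Limits

open Filter Set
open scoped Topology

lemma concaveOn_of_tendsto {ι E β : Type*} [AddCommMonoid E] [Module ℝ E] [AddCommMonoid β]
    [Module ℝ β] [PartialOrder β] [TopologicalSpace β] [OrderClosedTopology β] [ContinuousAdd β]
    [ContinuousConstSMul ℝ β] {l : Filter ι} [l.NeBot] {S : Set E} {F : ι → E → β} {f : E → β}
    (hF : ∀ i, ConcaveOn ℝ S (F i)) (hlim : ∀ z ∈ S, Tendsto (F · z) l (𝓝 (f z))) :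
    ConcaveOn ℝ S f := by
  have hS : Convex ℝ S := (hF l.nonempty_of_neBot.some).1
  exact ⟨hS, fun a ha b hb α β hα hβ hαβ => le_of_tendsto_of_tendsto'
    (((hlim a ha).const_smul α).add ((hlim b hb).const_smul β)) (hlim _ (hS ha hb hα hβ hαβ))
    fun i => (hF i).2 ha hb hα hβ hαβ⟩

lemma continuous_cfc_of_continuousOn_uncurry {A : Type*} [CStarAlgebra A] {X : Type*}
    [UniformSpace X] [WeaklyLocallyCompactSpace X] {F : X → ℝ → ℝ} {a : A}
    (hF : ContinuousOn F.uncurry (univ ×ˢ spectrum ℝ a)) :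
    Continuous fun s => cfc (F s) a := by
  refine continuous_iff_continuousAt.2 fun s => ?_
  obtain ⟨K, hK, hKs⟩ := exists_compact_mem_nhds s
  have hunif : UniformContinuousOn F.uncurry (K ×ˢ spectrum ℝ a) :=
    (hK.prod (ContinuousFunctionalCalculus.isCompact_spectrum a)).uniformContinuousOn_of_continuous
      (hF.mono (prod_mono_left (subset_univ K)))
  have htendsto := hunif.tendstoUniformlyOn (mem_of_mem_nhds hKs)
  rw [nhdsWithin_eq_nhds.2 hKs] at htendsto
  exact continuousAt_cfc_fun htendsto (.of_forall fun t => hF.uncurry_left t (mem_univ t))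

lemma tendsto_geom_sum_one_sub {p : ℝ} (hp0 : 0 < p) (hp1 : p ≤ 1) :
    Tendsto (fun k => ∑ i ∈ Finset.range k, (1 - p) ^ i) atTop (𝓝 (1 / p)) := by
  simpa only [sub_sub_cancel, one_div] using
    (hasSum_geometric_of_lt_one (sub_nonneg.2 hp1) (sub_lt_self 1 hp0)).tendsto_sum_nat

end Limits

section PowerMean

open CFC Filter Real Set

variable {A : Type*} [CStarAlgebra A] [PartialOrder A] [StarOrderedRing A] {p l m : ℝ}

lemma concaveOn_cfc_rpow_mul {f : ℝ → ℝ} (hp : p ∈ Icc (0 : ℝ) 1) (hl : 0 ≤ l) (hm : 0 ≤ m)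
    (hf : ContinuousOn f (Ici 0)) (hf0 : ∀ x ∈ Ici (0 : ℝ), 0 < f x)
    (hconc : ConcaveOn ℝ (Ici (0 : A)) (cfc f)) :
    ConcaveOn ℝ (Ici (0 : A)) (cfc fun x => f x ^ (1 - p) * (l * x ^ p + m)) := by
  have hspec {a : A} (ha : 0 ≤ a) : spectrum ℝ a ⊆ Ici 0 := fun _ hx =>
    spectrum_nonneg_of_nonneg ha hx
  have hpos (a : A) (ha : a ∈ Ici (0 : A)) : IsStrictlyPositive (cfc f a) :=
    (cfc_isStrictlyPositive_iff f a (hf.mono (hspec ha))).2 fun x hx => hf0 x (hspec ha hx)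
  have hself := concaveOn_geomMean hp hconc (concaveOn_id (convex_Ici 0)) hpos fun _ ha => ha
  have hone := concaveOn_geomMean hp hconc (concaveOn_const (1 : A) (convex_Ici 0)) hpos
    fun _ _ => zero_le_one
  exact ((hself.smul hl).add (hone.smul hm)).congr fun a ha =>
    smul_geomMean_add_smul_geomMean_one ha hp (hf.mono (hspec ha)) fun x hx => hf0 x (hspec ha hx)

lemma concaveOn_cfc_rpow_geom_sum (hp : p ∈ Icc (0 : ℝ) 1) (hl : 0 ≤ l) (hm : 0 < m) (k : ℕ) :
    ConcaveOn ℝ (Ici (0 : A))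
      (cfc fun x => (l * x ^ p + m) ^ (∑ i ∈ Finset.range k, (1 - p) ^ i)) := by
  have hpos (x : ℝ) (hx : 0 ≤ x) : 0 < l * x ^ p + m :=
    add_pos_of_nonneg_of_pos (mul_nonneg hl (rpow_nonneg hx p)) hm
  have hcont : Continuous fun x : ℝ => l * x ^ p + m :=
    ((continuous_id.rpow_const fun _ => .inr hp.1).const_mul l).add_const m
  induction k with
  | zero =>
    refine (concaveOn_const (1 : A) (convex_Ici 0)).congr fun a (ha : 0 ≤ a) => ?_
    simp only [Finset.range_zero, Finset.sum_empty, Real.rpow_zero, cfc_const_one ℝ a]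
  | succ k ih =>
    have hstep := concaveOn_cfc_rpow_mul hp hl hm.le
      (hcont.continuousOn.rpow_const fun x hx => .inl (hpos x hx).ne')
      (fun x hx => rpow_pos_of_pos (hpos x hx) _) ih
    refine hstep.congr fun a (ha : 0 ≤ a) => cfc_congr fun x hx => ?_
    have hx := hpos x (spectrum_nonneg_of_nonneg ha hx)
    rw [← Real.rpow_mul hx.le, ← rpow_add_one hx.ne', geom_sum_succ, mul_comm (1 - p)]

lemma concaveOn_cfc_rpow_one_div_of_pos (hp0 : 0 < p) (hp1 : p ≤ 1) (hl : 0 ≤ l) (hm : 0 < m) :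
    ConcaveOn ℝ (Ici (0 : A)) (cfc fun x => (l * x ^ p + m) ^ (1 / p)) := by
  refine concaveOn_of_tendsto (l := atTop) (concaveOn_cfc_rpow_geom_sum ⟨hp0.le, hp1⟩ hl hm)
    fun a (ha : 0 ≤ a) => ?_
  have hbase : Continuous fun z : ℝ × ℝ => l * z.2 ^ p + m :=
    ((continuous_snd.rpow_const fun _ => .inr hp0.le).const_mul l).add_const m
  have hcont : ContinuousOn (fun s x : ℝ => (l * x ^ p + m) ^ s).uncurry
      (univ ×ˢ spectrum ℝ a) :=
    hbase.continuousOn.rpow continuousOn_fst fun z hz => .inl (add_pos_of_nonneg_of_pos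
      (mul_nonneg hl (rpow_nonneg (spectrum_nonneg_of_nonneg ha hz.2) p)) hm).ne'
  exact ((continuous_cfc_of_continuousOn_uncurry hcont).tendsto _).comp
    (tendsto_geom_sum_one_sub hp0 hp1)

lemma concaveOn_cfc_rpow_one_div (hp0 : 0 < p) (hp1 : p ≤ 1) (hl : 0 ≤ l) (hm : 0 ≤ m) :
    ConcaveOn ℝ (Ici (0 : A)) (cfc fun x => (l * x ^ p + m) ^ (1 / p)) := by
  obtain rfl | hm := hm.eq_or_lt
  · have hlin := (concaveOn_id (convex_Ici (0 : A))).smul (rpow_nonneg hl (1 / p))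
    refine hlin.congr fun a (ha : 0 ≤ a) => ?_
    dsimp only [id]
    rw [← cfc_const_mul_id (l ^ (1 / p)) a]
    refine cfc_congr fun x hx => ?_
    have hx := spectrum_nonneg_of_nonneg ha hx
    rw [add_zero, mul_rpow hl (rpow_nonneg hx p), one_div, rpow_rpow_inv hx hp0.ne']
  · exact concaveOn_cfc_rpow_one_div_of_pos hp0 hp1 hl hm

theorem stmt14_general (hp0 : 0 < p) (hp1 : p ≤ 1) (hl : 0 ≤ l) (hm : 0 ≤ m) :
    ConcaveOn ℝ (Ici (0 : A)) fun a => (l • a ^ p + m • (1 : A)) ^ (1 / p) := by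
  refine (concaveOn_cfc_rpow_one_div hp0 hp1 hl hm).congr fun a (ha : 0 ≤ a) => ?_
  have hxp : ContinuousOn (fun x : ℝ => x ^ p) (spectrum ℝ a) :=
    continuousOn_id.rpow_const fun _ _ => .inr hp0.le
  have hpos (x : ℝ) (hx : x ∈ spectrum ℝ a) : 0 ≤ l * x ^ p + m :=
    add_nonneg (mul_nonneg hl (rpow_nonneg (spectrum_nonneg_of_nonneg ha hx) p)) hm
  rw [rpow_eq_cfc_real ha, ← cfc_const_mul l _ a hxp, ← Algebra.algebraMap_eq_smul_one,
    ← cfc_add_const m _ a (hxp.const_mul l),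
    cfc_rpow_of_nonneg (.of_nonneg ha) (one_div_pos.2 hp0).le (by fun_prop) hpos]

end PowerMean

section Matrix

open scoped MatrixOrder Matrix.Norms.L2Operator

variable {n : ℕ}

lemma mpow_eq_rpow {A : Matrix (Fin n) (Fin n) ℂ} (hA : 0 ≤ A) (q : ℝ) : mpow A q = A ^ q := by
  have hA' : A.IsHermitian := (Matrix.nonneg_iff_posSemidef.1 hA).isHermitian
  rw [CFC.rpow_eq_cfc_real hA, hA'.cfc_eq, Matrix.IsHermitian.cfc, Unitary.conjStarAlgAut_apply,
    mpow, dif_pos hA']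
  rfl

lemma concaveOn_mpow_smul_mpow_add {p l m : ℝ} (hp0 : 0 < p) (hp1 : p ≤ 1) (hl : 0 ≤ l)
    (hm : 0 ≤ m) :
    ConcaveOn ℝ (Set.Ici (0 : Matrix (Fin n) (Fin n) ℂ)) fun A =>
      mpow (l • mpow A p + m • 1) (1 / p) := by
  refine (stmt14_general hp0 hp1 hl hm).congr fun A (hA : 0 ≤ A) => ?_
  rw [mpow_eq_rpow hA, mpow_eq_rpow]
  exact add_nonneg (smul_nonneg hl CFC.rpow_nonneg) (smul_nonneg hm zero_le_one)

end Matrix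

theorem stmt14 {n : ℕ} (p lam : ℝ) (hp0 : 0 < p) (hp1 : p ≤ 1)
    (hl0 : 0 ≤ lam) (hl1 : lam ≤ 1)
    (A₁ A₂ : Matrix (Fin n) (Fin n) ℂ) (hA₁ : A₁.PosDef) (hA₂ : A₂.PosDef)
    (α : ℝ) (hα0 : 0 ≤ α) (hα1 : α ≤ 1) :
    (mpow (lam • mpow (α • A₁ + (1 - α) • A₂) p + (1 - lam) • (1 : Matrix (Fin n) (Fin n) ℂ))
        (1 / p) -
      (α • mpow (lam • mpow A₁ p + (1 - lam) • 1) (1 / p) +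
        (1 - α) • mpow (lam • mpow A₂ p + (1 - lam) • 1) (1 / p))).PosSemidef := by
  open scoped MatrixOrder in
  exact (concaveOn_mpow_smul_mpow_add hp0 hp1 hl0 (sub_nonneg.2 hl1)).2
    hA₁.posSemidef.nonneg hA₂.posSemidef.nonneg hα0 (sub_nonneg.2 hα1) (add_sub_cancel α 1)
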